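/- Consider the two-player Stag-Hunt game G with action sets A₁ = A₂ = {Stag, Hare} and utilities (u₁,u₂) given by (Stag,Stag) = (4,4), (Stag,Hare) = (1,3), (Hare,Stag) = (3,1), (Hare,Hare) = (2,2). For every initial reference point a₀ ∈ A, every positive integer k, and every admissible player function I, the no-harm equilibrium outcome of Γ(a₀,k,I) is (Stag,Stag). -/

import Mathlib

namespace NoHarm

/-- A finite normal form game with `n` players: finite action sets `A i`,
nonempty, with decidable equality, and utility functions `u i : Profile → ℝ`. -/
structure Game (n : ℕ) where
  A : Fin n → Type
  fintypeA : ∀ i, Fintype (A i)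
  decA : ∀ i, DecidableEq (A i)
  neA : ∀ i, Nonempty (A i)
  u : Fin n → (∀ i, A i) → ℝ

attribute [instance] Game.fintypeA Game.decA Game.neA

/-- Action profiles of `G`. -/
abbrev Profile {n : ℕ} (G : Game n) : Type := ∀ i, G.A i

/-- A recorded move in the extensive form game `Γ`: the acting player together
with their choice (`none` = pass, `some a` = choose action `a`; choosing the
current component of the state is "staying", any other action is "moving"). -/
abbrev Move {n : ℕ} (G : Game n) : Type := Σ i : Fin n, Option (G.A i)

/-- A node of `Γ`, identified with the history of moves leading to it
(the root is `[]`). -/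
abbrev Hist {n : ℕ} (G : Game n) : Type := List (Move G)

variable {n : ℕ}

/-- One step of the left fold computing, along a history, the triple
(current state, current reference point, player who established the current
reference point by staying -- `none` for the initial reference point). -/
def stepFold (G : Game n) (x : Profile G × Profile G × Option (Fin n)) (m : Move G) :
    Profile G × Profile G × Option (Fin n) :=
  match m with
  | ⟨_, none⟩ => x
  | ⟨i, some a⟩ =>
    if a = x.1 i then (x.1, x.1, some i)
    else (Function.update x.1 i a, x.2.1, x.2.2)

/-- The (state, reference point, proposer) data at the node `h` of `Γ(a0,·,·)`. -/
def fold3 (G : Game n) (a0 : Profile G) (h : Hist G) :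
    Profile G × Profile G × Option (Fin n) :=
  h.foldl (stepFold G) (a0, a0, none)

/-- The state `S(x)` at a node. -/
def state (G : Game n) (a0 : Profile G) (h : Hist G) : Profile G := (fold3 G a0 h).1

/-- The reference point at a node (the most recent state at which a player
stayed, initially `a0`). -/
def refpt (G : Game n) (a0 : Profile G) (h : Hist G) : Profile G := (fold3 G a0 h).2.1

/-- The player who established the current reference point by staying
(`none` if it is still the initial reference point `a0`). -/
def proposer (G : Game n) (a0 : Profile G) (h : Hist G) : Option (Fin n) :=
  (fold3 G a0 h).2.2

/-- `m` is a stay action at the node `h`: the mover chooses exactly the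
component of the current state belonging to them. -/
def IsStay (G : Game n) (a0 : Profile G) (h : Hist G) (m : Move G) : Prop :=
  m.2 = some (state G a0 h m.1)

/-- Termination condition (i): one player stayed at a state `b`, making it
the reference point, and a different player subsequently also stays at `b`. -/
def TerminalStay (G : Game n) (a0 : Profile G) (h : Hist G) : Prop :=
  ∃ (h' : Hist G) (m : Move G) (i : Fin n),
    h = h' ++ [m] ∧ IsStay G a0 h' m ∧ refpt G a0 h' = state G a0 h' ∧
    proposer G a0 h' = some i ∧ i ≠ m.1

/-- Termination condition (ii): all `n` players consecutively pass
(the last `n` moves are passes and every player is among their movers). -/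
def TerminalPass (G : Game n) (h : Hist G) : Prop :=
  n ≤ h.length ∧ (∀ m ∈ h.drop (h.length - n), m.2 = none) ∧
    (∀ i : Fin n, ∃ m ∈ h.drop (h.length - n), m.1 = i)

/-- Terminal nodes of `Γ(a0,·,·)`. -/
def Terminal (G : Game n) (a0 : Profile G) (h : Hist G) : Prop :=
  TerminalStay G a0 h ∨ TerminalPass G h

/-- Number of predecessor nodes of `h` having the same state as `h` at which
the move `m` was made. -/
def countAct (G : Game n) (a0 : Profile G) (h : Hist G) (m : Move G) : ℕ :=
  ((Finset.range h.length).filter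
    (fun t => h[t]? = some m ∧ state G a0 (h.take t) = state G a0 h)).card

/-- Availability of the choice `c` for player `i` at node `h`: pass is always
available, and an action `a` is available iff `i` has chosen `a` at fewer than
`k` predecessor nodes carrying the same state as `h`. -/
def availAct (G : Game n) (a0 : Profile G) (k : ℕ) (h : Hist G) {i : Fin n}
    (c : Option (G.A i)) : Prop :=
  ∀ a : G.A i, c = some a → countAct G a0 h ⟨i, some a⟩ < k

/-- `h` is a (valid) node of the game tree of `Γ(a0,k,I)`: at each step the
recorded mover is the active player given by the player function `I`, the
chosen action was available, and no proper predecessor is terminal. -/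
structure IsNode (G : Game n) (a0 : Profile G) (k : ℕ) (I : Hist G → Fin n)
    (h : Hist G) : Prop where
  mover : ∀ (t : ℕ) (ht : t < h.length), (h.get ⟨t, ht⟩).1 = I (h.take t)
  avail : ∀ (t : ℕ) (ht : t < h.length), availAct G a0 k (h.take t) (h.get ⟨t, ht⟩).2
  nonterm : ∀ t < h.length, ¬ Terminal G a0 (h.take t)

/-- The player function is admissible: along every path of play the numbers of
nodes at which any two players have been active differ by at most one. -/
def Admissible (G : Game n) (a0 : Profile G) (k : ℕ) (I : Hist G → Fin n) : Prop :=
  ∀ h, IsNode G a0 k I h → ∀ i j : Fin n,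
    (h.map Sigma.fst).count i ≤ (h.map Sigma.fst).count j + 1

/-- A pure strategy of player `i`: a choice (pass or an action) at every node. -/
abbrev Strategy (G : Game n) (i : Fin n) : Type := Hist G → Option (G.A i)

/-- A pure strategy profile. -/
abbrev StratProfile (G : Game n) : Type := ∀ i, Strategy G i

/-- A strategy profile is valid if at every non-terminal node of the tree the
active player's prescribed choice is available. -/
def ValidProfile (G : Game n) (a0 : Profile G) (k : ℕ) (I : Hist G → Fin n)
    (σ : StratProfile G) : Prop :=
  ∀ h, IsNode G a0 k I h → ¬ Terminal G a0 h → availAct G a0 k h (σ (I h) h)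

open Classical in
/-- Play according to `σ` for (at most) the given number of steps from a node,
stopping at terminal nodes. -/
noncomputable def playN (G : Game n) (a0 : Profile G) (I : Hist G → Fin n)
    (σ : StratProfile G) : ℕ → Hist G → Hist G
  | 0, h => h
  | (t + 1), h =>
    if Terminal G a0 h then h
    else playN G a0 I σ t (h ++ [⟨I h, σ (I h) h⟩])

/-- A (generous) upper bound for the length of any play of `Γ(a0,k,I)`. -/
def bound (G : Game n) (k : ℕ) : ℕ :=
  ((k + 2) * (Fintype.card (Profile G) + 2) * ((∑ i, Fintype.card (G.A i)) + 2) + 2)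
    * (n + 2) * 4

/-- The outcome of `σ` in the subgame rooted at `h`: the reference point at the
terminal node reached by playing `σ` from `h`. -/
noncomputable def outcomeFrom (G : Game n) (a0 : Profile G) (k : ℕ)
    (I : Hist G → Fin n) (σ : StratProfile G) (h : Hist G) : Profile G :=
  refpt G a0 (playN G a0 I σ (bound G k + 1) h)

/-- The outcome of the strategy profile `σ` in `Γ(a0,k,I)`. -/
noncomputable def outcome (G : Game n) (a0 : Profile G) (k : ℕ)
    (I : Hist G → Fin n) (σ : StratProfile G) : Profile G :=
  outcomeFrom G a0 k I σ []

/-- `σ` satisfies the no-harm principle: every stay action it prescribes, at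
every (on- or off-path) non-terminal node of the tree, does not harm any other
player relative to the reference point at that node. -/
def SatNHP (G : Game n) (a0 : Profile G) (k : ℕ) (I : Hist G → Fin n)
    (σ : StratProfile G) : Prop :=
  ∀ h, IsNode G a0 k I h → ¬ Terminal G a0 h →
    σ (I h) h = some (state G a0 h (I h)) →
    ∀ j, j ≠ I h → G.u j (refpt G a0 h) ≤ G.u j (state G a0 h)

/-- No-harm equilibrium of `Γ(a0,k,I)`: a valid strategy profile satisfying the
NHP such that at every non-terminal node the active player's choice is a best
response among deviations keeping the profile valid and NHP-compliant. -/
def NHE (G : Game n) (a0 : Profile G) (k : ℕ) (I : Hist G → Fin n)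
    (σ : StratProfile G) : Prop :=
  ValidProfile G a0 k I σ ∧ SatNHP G a0 k I σ ∧
  ∀ h, IsNode G a0 k I h → ¬ Terminal G a0 h →
    ∀ τ : Strategy G (I h),
      ValidProfile G a0 k I (Function.update σ (I h) τ) →
      SatNHP G a0 k I (Function.update σ (I h) τ) →
      G.u (I h) (outcomeFrom G a0 k I (Function.update σ (I h) τ) h) ≤
        G.u (I h) (outcomeFrom G a0 k I σ h)

/-- Subgame perfect equilibrium of `Γ(a0,k,I)` (no NHP constraint). -/
def SPE (G : Game n) (a0 : Profile G) (k : ℕ) (I : Hist G → Fin n)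
    (σ : StratProfile G) : Prop :=
  ValidProfile G a0 k I σ ∧
  ∀ h, IsNode G a0 k I h → ¬ Terminal G a0 h →
    ∀ τ : Strategy G (I h),
      ValidProfile G a0 k I (Function.update σ (I h) τ) →
      G.u (I h) (outcomeFrom G a0 k I (Function.update σ (I h) τ) h) ≤
        G.u (I h) (outcomeFrom G a0 k I σ h)

/-- `b` Pareto dominates `a`. -/
def ParetoDom (G : Game n) (b a : Profile G) : Prop :=
  (∀ i, G.u i a ≤ G.u i b) ∧ ∃ i, G.u i a < G.u i b

/-- `a` is Pareto optimal. -/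
def ParetoOpt (G : Game n) (a : Profile G) : Prop := ∀ b, ¬ ParetoDom G b a

/-- `b` strictly Pareto dominates `a`. -/
def StrictDom (G : Game n) (b a : Profile G) : Prop := ∀ i, G.u i a < G.u i b

/-- `a` is weakly Pareto optimal. -/
def WeakParetoOpt (G : Game n) (a : Profile G) : Prop := ∀ b, ¬ StrictDom G b a

/-- Preferences are strict: each utility function is injective on profiles. -/
def StrictPrefs (G : Game n) : Prop := ∀ i, Function.Injective (G.u i)


/-- The Stag-Hunt game: actions `0 = Stag`, `1 = Hare`, payoffs
`(Stag,Stag)=(4,4), (Stag,Hare)=(1,3), (Hare,Stag)=(3,1), (Hare,Hare)=(2,2)`. -/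
def stagHunt : Game 2 where
  A _ := Fin 2
  fintypeA _ := inferInstance
  decA _ := inferInstance
  neA _ := inferInstance
  u i s :=
    if s 0 = 0 then
      (if s 1 = 0 then 4 else (if i = 0 then 1 else 3))
    else
      (if s 1 = 0 then (if i = 0 then 3 else 1) else 2)

/-- (Stag,Stag). -/
def stagStag : Profile stagHunt := fun _ => (0 : Fin 2)

/-! Suppose every player ranks the profile `b` strictly above all others. An equilibrium admits no
profitable one-shot deviation, so a player who has a feasible choice leading to a node with
outcome `b` is itself at a node with outcome `b`. Once the reference point is `b`, passing until the
end of the game is such a choice at every node. Before that, every player switches to their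
component of `b` (or passes if it is already there) the first time they act. By admissibility nobody
acts a second time before the state is `b`, so these choices are still available; and
staying at `b` harms nobody and makes `b` the reference point.

An equilibrium exists by backward induction on the length of a node: by admissibility each block of
`n` consecutive moves involves every player, so it contains an action other than a pass, and each of
the finitely many actions can be used at most `k` times at each of the finitely many states. -/

section History

variable {G : Game n} {a0 : Profile G} {h : Hist G} {i : Fin n}

theorem fold3_append_singleton (h : Hist G) (m : Move G) :
    fold3 G a0 (h ++ [m]) = stepFold G (fold3 G a0 h) m := by
  simp [fold3]

theorem state_append_pass (h : Hist G) (i : Fin n) :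
    state G a0 (h ++ [⟨i, none⟩]) = state G a0 h := by
  simp [state, fold3_append_singleton, stepFold]

theorem refpt_append_pass (h : Hist G) (i : Fin n) :
    refpt G a0 (h ++ [⟨i, none⟩]) = refpt G a0 h := by
  simp [refpt, fold3_append_singleton, stepFold]

theorem proposer_append_pass (h : Hist G) (i : Fin n) :
    proposer G a0 (h ++ [⟨i, none⟩]) = proposer G a0 h := by
  simp [proposer, fold3_append_singleton, stepFold]

theorem state_append_move {a : G.A i} (ha : a ≠ state G a0 h i) :
    state G a0 (h ++ [⟨i, some a⟩]) = Function.update (state G a0 h) i a := by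
  unfold state at ha ⊢
  simp [fold3_append_singleton, stepFold, ha]

theorem proposer_append_move {a : G.A i} (ha : a ≠ state G a0 h i) :
    proposer G a0 (h ++ [⟨i, some a⟩]) = proposer G a0 h := by
  unfold state at ha
  simp [proposer, fold3_append_singleton, stepFold, ha]

theorem refpt_append_stay (h : Hist G) (i : Fin n) :
    refpt G a0 (h ++ [⟨i, some (state G a0 h i)⟩]) = state G a0 h := by
  simp [refpt, state, fold3_append_singleton, stepFold]

theorem proposer_eq_none_of_append {m : Move G} (hp : proposer G a0 (h ++ [m]) = none) :
    proposer G a0 h = none := by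
  obtain ⟨i, _ | a⟩ := m
  · rwa [proposer_append_pass] at hp
  · by_cases ha : a = state G a0 h i
    · unfold state at ha
      simp [proposer, fold3_append_singleton, stepFold, ha] at hp
    · rwa [proposer_append_move ha] at hp

theorem not_terminalStay_of_proposer_eq_none (hp : proposer G a0 h = none) :
    ¬ TerminalStay G a0 h := by
  rintro ⟨h', m, i, rfl, -, -, hi, -⟩
  simp [proposer_eq_none_of_append hp] at hi

theorem TerminalPass.mem_movers (hh : TerminalPass G h) (i : Fin n) : i ∈ h.map Sigma.fst := by
  obtain ⟨m, hm, rfl⟩ := hh.2.2 i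
  exact List.mem_map_of_mem (List.mem_of_mem_drop hm)

theorem TerminalPass.exists_eq_append_pass (hh : TerminalPass G h) (hn : 0 < n) :
    ∃ h' i, h = h' ++ [⟨i, none⟩] := by
  obtain ⟨hlen, hpass, -⟩ := hh
  have hne : h.drop (h.length - n) ≠ [] := by
    rw [Ne, List.drop_eq_nil_iff]
    omega
  obtain rfl | ⟨h', ⟨i, c⟩, rfl⟩ := h.eq_nil_or_concat'
  · exact absurd List.drop_nil hne
  obtain rfl : c = none := hpass ⟨i, c⟩ (by
    simpa [List.getLast_drop] using List.getLast_mem hne)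
  exact ⟨h', i, rfl⟩

theorem countAct_eq_zero_of_notMem_movers (hi : i ∉ h.map Sigma.fst) (c : Option (G.A i)) :
    countAct G a0 h ⟨i, c⟩ = 0 := by
  rw [countAct, Finset.card_eq_zero, Finset.filter_eq_empty_iff]
  rintro t - ⟨ht, -⟩
  exact hi (List.mem_map_of_mem (List.mem_of_getElem? ht))

theorem countAct_eq_zero_of_state_ne
    (hs : ∀ t < h.length, state G a0 (h.take t) ≠ state G a0 h) (m : Move G) :
    countAct G a0 h m = 0 := by
  rw [countAct, Finset.card_eq_zero, Finset.filter_eq_empty_iff]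
  rintro t ht ⟨-, hst⟩
  exact hs t (Finset.mem_range.1 ht) hst

end History

section Node

variable {G : Game n} {a0 : Profile G} {k : ℕ} {I : Hist G → Fin n} {h : Hist G}

theorem isNode_nil : IsNode G a0 k I [] :=
  ⟨fun _ ht => absurd ht (Nat.not_lt_zero _), fun _ ht => absurd ht (Nat.not_lt_zero _),
    fun _ ht => absurd ht (Nat.not_lt_zero _)⟩

theorem availAct_none (h : Hist G) (i : Fin n) : availAct G a0 k h (none : Option (G.A i)) :=
  fun _ ha => nomatch ha

theorem availAct_some {i : Fin n} {a : G.A i} :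
    availAct G a0 k h (some a) ↔ countAct G a0 h ⟨i, some a⟩ < k := by
  simp [availAct]

theorem isNode_append_singleton {m : Move G} :
    IsNode G a0 k I (h ++ [m]) ↔
      IsNode G a0 k I h ∧ ¬ Terminal G a0 h ∧ m.1 = I h ∧ availAct G a0 k h m.2 := by
  have hlen : (h ++ [m]).length = h.length + 1 := by simp
  have htake {t : ℕ} (ht : t < h.length) : (h ++ [m]).take t = h.take t :=
    List.take_append_of_le_length ht.le
  have hget {t : ℕ} (ht : t < h.length) (ht' : t < (h ++ [m]).length) :
      (h ++ [m]).get ⟨t, ht'⟩ = h.get ⟨t, ht⟩ := by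
    simp [List.getElem_append_left ht]
  have hlast (ht : h.length < (h ++ [m]).length) : (h ++ [m]).get ⟨h.length, ht⟩ = m := by simp
  have htakeLast : (h ++ [m]).take h.length = h := by simp
  constructor
  · intro H
    have hlt : h.length < (h ++ [m]).length := by omega
    refine ⟨⟨fun t ht => ?_, fun t ht => ?_, fun t ht => ?_⟩, ?_, ?_, ?_⟩
    · have := H.mover t (by omega)
      rwa [hget ht, htake ht] at this
    · have := H.avail t (by omega)
      rwa [hget ht, htake ht] at this
    · simpa only [htake ht] using H.nonterm t (by omega)
    · simpa only [htakeLast] using H.nonterm h.length hlt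
    · simpa only [hlast, htakeLast] using H.mover h.length hlt
    · have := H.avail h.length hlt
      rwa [hlast, htakeLast] at this
  · rintro ⟨H, hterm, hmover, havail⟩
    have split {t : ℕ} (ht : t < (h ++ [m]).length) : t < h.length ∨ t = h.length := by omega
    refine ⟨fun t ht => ?_, fun t ht => ?_, fun t ht => ?_⟩ <;> obtain ht' | rfl := split ht
    · simpa only [hget ht', htake ht'] using H.mover t ht'
    · simpa only [hlast, htakeLast] using hmover
    · rw [hget ht', htake ht']
      exact H.avail t ht'
    · rwa [hlast, htakeLast]
    · simpa only [htake ht'] using H.nonterm t ht'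
    · rwa [htakeLast]

theorem IsNode.append_choice (H : IsNode G a0 k I h) (ht : ¬ Terminal G a0 h)
    {c : Option (G.A (I h))} (hc : availAct G a0 k h c) : IsNode G a0 k I (h ++ [⟨I h, c⟩]) :=
  isNode_append_singleton.2 ⟨H, ht, rfl, hc⟩

theorem IsNode.of_append {h' : Hist G} (H : IsNode G a0 k I (h ++ h')) : IsNode G a0 k I h := by
  induction h' using List.reverseRecOn with
  | nil => simpa using H
  | append_singleton h' m ih =>
    rw [← List.append_assoc, isNode_append_singleton] at H
    exact ih H.1

theorem IsNode.take (H : IsNode G a0 k I h) (t : ℕ) : IsNode G a0 k I (h.take t) := by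
  rw [← List.take_append_drop t h] at H
  exact H.of_append

end Node

theorem eq_of_sum_eq_card_mul_of_le_add_one {ι : Type*} [Fintype ι] {c : ι → ℕ} {j : ℕ}
    (hc : ∀ i l, c i ≤ c l + 1) (hsum : ∑ i, c i = Fintype.card ι * j) (i : ι) : c i = j := by
  have hconst : ∑ _i : ι, j = Fintype.card ι * j := by simp
  apply le_antisymm <;> by_contra! hlt
  · have : ∑ _i : ι, j < ∑ i, c i :=
      Finset.sum_lt_sum (fun l _ => by have := hc i l; omega) ⟨i, Finset.mem_univ i, hlt⟩
    omega
  · have : ∑ i, c i < ∑ _i : ι, j :=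
      Finset.sum_lt_sum (fun l _ => by have := hc l i; omega) ⟨i, Finset.mem_univ i, hlt⟩
    omega

section Length

variable {G : Game n} {a0 : Profile G} {k : ℕ} {I : Hist G → Fin n} {h : Hist G}

theorem count_movers_eq_of_length_eq (hI : Admissible G a0 k I) (H : IsNode G a0 k I h) {j : ℕ}
    (hlen : h.length = j * n) (i : Fin n) : (h.map Sigma.fst).count i = j := by
  refine eq_of_sum_eq_card_mul_of_le_add_one (hI h H) ?_ i
  have := Multiset.sum_count_eq_card (s := Finset.univ) (m := (h.map Sigma.fst : Multiset (Fin n)))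
    fun i _ => Finset.mem_univ i
  simpa [hlen, mul_comm] using this

theorem exists_nonpass_mem_block (hI : Admissible G a0 k I) (H : IsNode G a0 k I h) {j : ℕ}
    (hlen : (j + 1) * n < h.length) :
    ∃ m ∈ (h.take ((j + 1) * n)).drop (j * n), m.2 ≠ none := by
  have hle : j * n ≤ (j + 1) * n := Nat.mul_le_mul_right n j.le_succ
  have hcount (r : ℕ) (hr : r * n < h.length) (i : Fin n) :
      ((h.take (r * n)).map Sigma.fst).count i = r :=
    count_movers_eq_of_length_eq hI (H.take _) (by simp [hr.le]) i
  by_contra! hpass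
  refine H.nonterm _ hlen (Or.inr ?_)
  have htake : (h.take ((j + 1) * n)).length = j * n + n := by
    rw [List.length_take_of_le hlen.le, Nat.succ_mul]
  have hdrop : (h.take ((j + 1) * n)).length - n = j * n := by omega
  refine ⟨by omega, by rwa [hdrop], fun i => ?_⟩
  rw [hdrop, ← List.mem_map, ← List.count_pos_iff]
  have hsplit := hcount (j + 1) hlen i
  rw [← List.take_append_drop (j * n) (h.take ((j + 1) * n)), List.map_append, List.count_append,
    List.take_take, min_eq_left hle, hcount j (hle.trans_lt hlen)] at hsplit
  omega

theorem le_countP_nonpass_take (hI : Admissible G a0 k I) (H : IsNode G a0 k I h) (j : ℕ)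
    (hlen : j * n < h.length) : j ≤ (h.take (j * n)).countP fun m => m.2.isSome := by
  induction j with
  | zero => exact Nat.zero_le _
  | succ j ih =>
    have hle : j * n ≤ (j + 1) * n := Nat.mul_le_mul_right n j.le_succ
    obtain ⟨m, hm, hsome⟩ := exists_nonpass_mem_block hI H hlen
    have hpos : 0 < ((h.take ((j + 1) * n)).drop (j * n)).countP fun m => m.2.isSome :=
      List.countP_pos_iff.2 ⟨m, hm, Option.isSome_iff_ne_none.2 hsome⟩
    rw [← List.take_append_drop (j * n) (h.take ((j + 1) * n)), List.countP_append, List.take_take,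
      min_eq_left hle]
    have := ih (hle.trans_lt hlen)
    omega

/-- The number of predecessor nodes of `h` with state `s` at which the move `m` was made, so that
`countAct` is the case where `s` is the state at `h` itself. -/
def countActAt (G : Game n) (a0 : Profile G) (h : Hist G) (s : Profile G) (m : Move G) : ℕ :=
  ((Finset.range h.length).filter fun t => h[t]? = some m ∧ state G a0 (h.take t) = s).card

theorem countActAt_append_singleton (h : Hist G) (s : Profile G) (m m' : Move G) :
    countActAt G a0 (h ++ [m']) s m =
      countActAt G a0 h s m + if m' = m ∧ state G a0 h = s then 1 else 0 := by
  have hcongr : ((Finset.range h.length).filter fun t =>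
      (h ++ [m'])[t]? = some m ∧ state G a0 ((h ++ [m']).take t) = s) =
      (Finset.range h.length).filter fun t => h[t]? = some m ∧ state G a0 (h.take t) = s := by
    refine Finset.filter_congr fun t ht => ?_
    have ht := Finset.mem_range.1 ht
    rw [List.getElem?_append_left ht, List.take_append_of_le_length ht.le]
  unfold countActAt
  rw [List.length_append, List.length_singleton, Finset.range_add_one, Finset.filter_insert, hcongr]
  split_ifs <;> simp_all

theorem countActAt_le (H : IsNode G a0 k I h) (s : Profile G) (i : Fin n) (a : G.A i) :
    countActAt G a0 h s ⟨i, some a⟩ ≤ k := by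
  induction h using List.reverseRecOn with
  | nil => simp [countActAt]
  | append_singleton h m ih =>
    obtain ⟨H, -, -, havail⟩ := isNode_append_singleton.1 H
    rw [countActAt_append_singleton]
    split_ifs with hm
    · obtain ⟨rfl, rfl⟩ := hm
      exact availAct_some.1 havail
    · exact ih H

theorem countP_nonpass_eq_sum (h : Hist G) :
    (h.countP fun m => m.2.isSome) =
      ∑ p : Profile G × Σ i, G.A i, countActAt G a0 h p.1 ⟨p.2.1, some p.2.2⟩ := by
  induction h using List.reverseRecOn with
  | nil => simp [countActAt]
  | append_singleton h m ih =>
    simp only [countActAt_append_singleton, Finset.sum_add_distrib, List.countP_append, ← ih]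
    congr 1
    obtain ⟨i, _ | a⟩ := m
    · have hne (p : Profile G × Σ i, G.A i) : (⟨i, none⟩ : Move G) ≠ ⟨p.2.1, some p.2.2⟩ := by
        intro hm
        cases congrArg (fun m => m.2.isSome) hm
      simp only [hne, false_and]
      simp
    · have hiff (p : Profile G × Σ i, G.A i) :
          ((⟨i, some a⟩ : Move G) = ⟨p.2.1, some p.2.2⟩ ∧ state G a0 h = p.1) ↔
            (state G a0 h, ⟨i, a⟩) = p := by
        obtain ⟨s, l, b⟩ := p
        constructor
        · rintro ⟨hm, rfl⟩
          cases hm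
          rfl
        · rintro ⟨⟩
          exact ⟨rfl, rfl⟩
      simp only [hiff]
      simp

theorem IsNode.countP_nonpass_le (H : IsNode G a0 k I h) :
    (h.countP fun m => m.2.isSome) ≤
      k * (Fintype.card (Profile G) * ∑ i, Fintype.card (G.A i)) := by
  rw [countP_nonpass_eq_sum (a0 := a0)]
  refine (Finset.sum_le_card_nsmul _ _ k fun p _ => countActAt_le H _ _ _).trans_eq ?_
  simp [mul_comm]

/-- No node of `Γ(a0,k,I)` lies beyond the horizon `bound G k` that `outcomeFrom` uses. -/
def PlaysBounded (G : Game n) (a0 : Profile G) (k : ℕ) (I : Hist G → Fin n) : Prop :=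
  ∀ h, IsNode G a0 k I h → h.length ≤ bound G k

theorem Admissible.playsBounded (hI : Admissible G a0 k I) : PlaysBounded G a0 k I := by
  intro h H
  have hn : 0 < n := (I h).pos
  obtain hzero | hpos := Nat.eq_zero_or_pos h.length
  · omega
  obtain ⟨j, hj, hlen⟩ : ∃ j, j * n < h.length ∧ h.length ≤ (j + 1) * n := by
    refine ⟨(h.length - 1) / n, ?_, ?_⟩
    · have := Nat.div_mul_le_self (h.length - 1) n
      omega
    · have := Nat.lt_mul_of_div_lt (Nat.lt_succ_self ((h.length - 1) / n)) hn
      rw [Nat.succ_eq_add_one] at this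
      omega
  have hle : j ≤ k * (Fintype.card (Profile G) * ∑ i, Fintype.card (G.A i)) :=
    ((le_countP_nonpass_take hI H j hj).trans (List.take_sublist _ _).countP_le).trans
      H.countP_nonpass_le
  calc h.length ≤ (j + 1) * n := hlen
    _ ≤ (k * (Fintype.card (Profile G) * ∑ i, Fintype.card (G.A i)) + 1) * n := by gcongr
    _ ≤ ((k + 2) * (Fintype.card (Profile G) + 2) * ((∑ i, Fintype.card (G.A i)) + 2) + 2) *
          (n + 2) := by
      rw [← mul_assoc]
      gcongr <;> omega
    _ ≤ bound G k := Nat.le_mul_of_pos_right _ (by norm_num)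

@[elab_as_elim]
theorem IsNode.backwardInduction (hB : PlaysBounded G a0 k I) {P : Hist G → Prop}
    (terminal : ∀ h, IsNode G a0 k I h → Terminal G a0 h → P h)
    (step : ∀ h, IsNode G a0 k I h → ¬ Terminal G a0 h →
      (∀ c : Option (G.A (I h)), availAct G a0 k h c → P (h ++ [⟨I h, c⟩])) → P h)
    {h : Hist G} (H : IsNode G a0 k I h) : P h := by
  by_cases ht : Terminal G a0 h
  · exact terminal h H ht
  · exact step h H ht fun c hc => backwardInduction hB terminal step (H.append_choice ht hc)
  termination_by bound G k + 1 - h.length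
  decreasing_by
    have := hB h H
    simp only [List.length_append, List.length_singleton]
    omega

end Length

section Play

variable {G : Game n} {a0 : Profile G} {k : ℕ} {I : Hist G → Fin n} {σ σ' : StratProfile G}
  {h : Hist G}

theorem playN_of_terminal (σ : StratProfile G) (t : ℕ) (ht : Terminal G a0 h) :
    playN G a0 I σ t h = h := by
  cases t <;> simp [playN, ht]

theorem playN_succ_of_not_terminal (σ : StratProfile G) (t : ℕ) (ht : ¬ Terminal G a0 h) :
    playN G a0 I σ (t + 1) h = playN G a0 I σ t (h ++ [⟨I h, σ (I h) h⟩]) := by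
  simp [playN, ht]

theorem playN_succ_of_terminal_playN {t : ℕ} (ht : Terminal G a0 (playN G a0 I σ t h)) :
    playN G a0 I σ (t + 1) h = playN G a0 I σ t h := by
  induction t generalizing h with
  | zero => exact playN_of_terminal σ _ ht
  | succ t ih =>
    by_cases hterm : Terminal G a0 h
    · rw [playN_of_terminal σ _ hterm, playN_of_terminal σ _ hterm]
    · rw [playN_succ_of_not_terminal σ t hterm] at ht ⊢
      rw [playN_succ_of_not_terminal σ _ hterm, ih ht]

theorem playN_congr {t : ℕ} (hσ : ∀ x, h.length ≤ x.length → ∀ i, σ i x = σ' i x) :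
    playN G a0 I σ t h = playN G a0 I σ' t h := by
  induction t generalizing h with
  | zero => rfl
  | succ t ih =>
    by_cases ht : Terminal G a0 h
    · rw [playN_of_terminal σ _ ht, playN_of_terminal σ' _ ht]
    · rw [playN_succ_of_not_terminal σ t ht, playN_succ_of_not_terminal σ' t ht, hσ h le_rfl]
      exact ih fun x hx => hσ x (by
        rw [List.length_append] at hx
        omega)

theorem terminal_playN (hB : PlaysBounded G a0 k I) (hσ : ValidProfile G a0 k I σ)
    (H : IsNode G a0 k I h) {t : ℕ} (ht : bound G k < h.length + t) :
    Terminal G a0 (playN G a0 I σ t h) := by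
  induction t generalizing h with
  | zero => exact absurd (hB h H) (by omega)
  | succ t ih =>
    by_cases hterm : Terminal G a0 h
    · rwa [playN_of_terminal σ _ hterm]
    · rw [playN_succ_of_not_terminal σ t hterm]
      exact ih (H.append_choice hterm (hσ h H hterm)) (by
        rw [List.length_append, List.length_singleton]
        omega)

theorem outcomeFrom_of_terminal (σ : StratProfile G) (ht : Terminal G a0 h) :
    outcomeFrom G a0 k I σ h = refpt G a0 h := by
  rw [outcomeFrom, playN_of_terminal σ _ ht]

theorem outcomeFrom_of_not_terminal (hB : PlaysBounded G a0 k I) (hσ : ValidProfile G a0 k I σ)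
    (H : IsNode G a0 k I h) (ht : ¬ Terminal G a0 h) :
    outcomeFrom G a0 k I σ h = outcomeFrom G a0 k I σ (h ++ [⟨I h, σ (I h) h⟩]) := by
  have hlen : bound G k < (h ++ [(⟨I h, σ (I h) h⟩ : Move G)]).length + bound G k := by simp
  have hend := terminal_playN hB hσ (H.append_choice ht (hσ h H ht)) hlen
  rw [outcomeFrom, playN_succ_of_not_terminal σ _ ht, outcomeFrom,
    playN_succ_of_terminal_playN hend]

theorem outcomeFrom_congr (hσ : ∀ x, h.length ≤ x.length → ∀ i, σ i x = σ' i x) :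
    outcomeFrom G a0 k I σ h = outcomeFrom G a0 k I σ' h := by
  rw [outcomeFrom, playN_congr hσ, outcomeFrom]

end Play

section OneShotDeviation

variable {G : Game n} {a0 : Profile G} {k : ℕ} {I : Hist G → Fin n} {σ : StratProfile G}
  {h : Hist G}

/-- The choices that player `i` may be prescribed at `h` in an equilibrium: those that are available
and satisfy the no-harm principle. -/
def Feasible (G : Game n) (a0 : Profile G) (k : ℕ) (h : Hist G) (i : Fin n)
    (c : Option (G.A i)) : Prop :=
  availAct G a0 k h c ∧
    (c = some (state G a0 h i) → ∀ j, j ≠ i → G.u j (refpt G a0 h) ≤ G.u j (state G a0 h))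

/-- A profile prescribing a feasible choice to the active player at every non-terminal node, i.e. a
valid profile that satisfies the no-harm principle. -/
def FeasibleProfile (G : Game n) (a0 : Profile G) (k : ℕ) (I : Hist G → Fin n)
    (σ : StratProfile G) : Prop :=
  ∀ h, IsNode G a0 k I h → ¬ Terminal G a0 h → Feasible G a0 k h (I h) (σ (I h) h)

/-- The active player at `h` does not gain by changing their choice at `h` alone. -/
def OneShotOptimal (G : Game n) (a0 : Profile G) (k : ℕ) (I : Hist G → Fin n)
    (σ : StratProfile G) (h : Hist G) : Prop :=
  ∀ c : Option (G.A (I h)), Feasible G a0 k h (I h) c →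
    G.u (I h) (outcomeFrom G a0 k I σ (h ++ [⟨I h, c⟩])) ≤ G.u (I h) (outcomeFrom G a0 k I σ h)

theorem feasible_none (h : Hist G) (i : Fin n) : Feasible G a0 k h i none :=
  ⟨availAct_none h i, fun hc => nomatch hc⟩

theorem feasible_some_of_ne {i : Fin n} {a : G.A i} (hc : countAct G a0 h ⟨i, some a⟩ < k)
    (ha : a ≠ state G a0 h i) : Feasible G a0 k h i (some a) :=
  ⟨availAct_some.2 hc, fun hstay => absurd (Option.some.inj hstay) ha⟩

theorem feasibleProfile_iff :
    FeasibleProfile G a0 k I σ ↔ ValidProfile G a0 k I σ ∧ SatNHP G a0 k I σ :=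
  ⟨fun hσ => ⟨fun h H ht => (hσ h H ht).1, fun h H ht => (hσ h H ht).2⟩,
    fun hσ h H ht => ⟨hσ.1 h H ht, hσ.2 h H ht⟩⟩

theorem FeasibleProfile.validProfile (hσ : FeasibleProfile G a0 k I σ) :
    ValidProfile G a0 k I σ :=
  (feasibleProfile_iff.1 hσ).1

theorem NHE.feasibleProfile (hσ : NHE G a0 k I σ) : FeasibleProfile G a0 k I σ :=
  feasibleProfile_iff.2 ⟨hσ.1, hσ.2.1⟩

theorem u_outcomeFrom_update_le_of_oneShotOptimal (hB : PlaysBounded G a0 k I)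
    (hσ : FeasibleProfile G a0 k I σ)
    (hopt : ∀ h, IsNode G a0 k I h → ¬ Terminal G a0 h → OneShotOptimal G a0 k I σ h)
    {i : Fin n} {τ : Strategy G i} (hτ : FeasibleProfile G a0 k I (Function.update σ i τ))
    (H : IsNode G a0 k I h) :
    G.u i (outcomeFrom G a0 k I (Function.update σ i τ) h) ≤
      G.u i (outcomeFrom G a0 k I σ h) := by
  refine IsNode.backwardInduction hB ?_ ?_ H
  · intro h _ ht
    rw [outcomeFrom_of_terminal _ ht, outcomeFrom_of_terminal _ ht]
  · intro h H ht ih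
    have hfeas := hτ h H ht
    rw [outcomeFrom_of_not_terminal hB hτ.validProfile H ht]
    refine (ih _ hfeas.1).trans ?_
    by_cases hi : I h = i
    · subst hi
      exact hopt h H ht _ hfeas
    · rw [Function.update_of_ne hi, ← outcomeFrom_of_not_terminal hB hσ.validProfile H ht]

theorem NHE.oneShotOptimal (hB : PlaysBounded G a0 k I) (hσ : NHE G a0 k I σ)
    (H : IsNode G a0 k I h) (ht : ¬ Terminal G a0 h) : OneShotOptimal G a0 k I σ h := by
  classical
  intro c hc
  set τ : Strategy G (I h) := Function.update (σ (I h)) h c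
  set σ' := Function.update σ (I h) τ
  have hdev : σ' (I h) h = c := by simp [σ', τ]
  have hsame {x : Hist G} (hx : x ≠ h) (i : Fin n) : σ' i x = σ i x := by
    obtain rfl | hi := eq_or_ne i (I h)
    · simp [σ', τ, hx]
    · simp [σ', hi]
  have hσ' : FeasibleProfile G a0 k I σ' := by
    intro x X xt
    obtain rfl | hx := eq_or_ne x h
    · rwa [hdev]
    · rw [hsame hx]
      exact hσ.feasibleProfile x X xt
  have hout : outcomeFrom G a0 k I σ' h = outcomeFrom G a0 k I σ (h ++ [⟨I h, c⟩]) := by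
    rw [outcomeFrom_of_not_terminal hB hσ'.validProfile H ht, hdev]
    refine outcomeFrom_congr fun x hx => hsame ?_
    rintro rfl
    rw [List.length_append, List.length_singleton] at hx
    omega
  obtain ⟨hvalid, hnhp⟩ := feasibleProfile_iff.1 hσ'
  exact hout ▸ hσ.2.2 h H ht τ hvalid hnhp

theorem nhe_iff_forall_oneShotOptimal (hB : PlaysBounded G a0 k I) :
    NHE G a0 k I σ ↔ FeasibleProfile G a0 k I σ ∧
      ∀ h, IsNode G a0 k I h → ¬ Terminal G a0 h → OneShotOptimal G a0 k I σ h := by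
  refine ⟨fun hσ => ⟨hσ.feasibleProfile, fun h H ht => hσ.oneShotOptimal hB H ht⟩, ?_⟩
  rintro ⟨hσ, hopt⟩
  obtain ⟨hvalid, hnhp⟩ := feasibleProfile_iff.1 hσ
  exact ⟨hvalid, hnhp, fun h H _ τ hvalid' hnhp' =>
    u_outcomeFrom_update_le_of_oneShotOptimal hB hσ hopt (feasibleProfile_iff.2 ⟨hvalid', hnhp'⟩) H⟩

theorem exists_feasible_forall_u_le (V : Hist G → Profile G) (h : Hist G) (i : Fin n) :
    ∃ c, Feasible G a0 k h i c ∧ ∀ c', Feasible G a0 k h i c' →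
      G.u i (V (h ++ [⟨i, c'⟩])) ≤ G.u i (V (h ++ [⟨i, c⟩])) :=
  Set.exists_max_image {c | Feasible G a0 k h i c} 
    (fun c => G.u i (V (h ++ [(⟨i, c⟩ : Move G)]))) (Set.toFinite _) ⟨none, feasible_none h i⟩

theorem exists_oneShotOptimal_of_bound_lt_length_add (hB : PlaysBounded G a0 k I) (d : ℕ) :
    ∃ σ : StratProfile G, FeasibleProfile G a0 k I σ ∧ ∀ h, IsNode G a0 k I h →
      ¬ Terminal G a0 h → bound G k < h.length + d → OneShotOptimal G a0 k I σ h := by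
  induction d with
  | zero =>
    exact ⟨fun _ _ => none, fun h _ _ => feasible_none h _,
      fun h H _ hd => absurd (hB h H) (by omega)⟩
  | succ d ih =>
    obtain ⟨σ, hσ, hopt⟩ := ih
    choose best hbest using exists_feasible_forall_u_le (a0 := a0) (k := k)
      (outcomeFrom G a0 k I σ)
    let σ' : StratProfile G := fun i h => if bound G k = h.length + d then best h i else σ i h
    have hσ' : FeasibleProfile G a0 k I σ' := by
      intro h H ht
      by_cases hd : bound G k = h.length + d
      · simpa [σ', hd] using (hbest h (I h)).1
      · simpa [σ', hd] using hσ h H ht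
    have hout {h : Hist G} (hd : bound G k < h.length + d) :
        outcomeFrom G a0 k I σ' h = outcomeFrom G a0 k I σ h :=
      outcomeFrom_congr fun x hx i => if_neg (by omega)
    refine ⟨σ', hσ', fun h H ht hd c hc => ?_⟩
    have hchild (c : Option (G.A (I h))) :=
      hout (h := h ++ [⟨I h, c⟩]) (by
        rw [List.length_append, List.length_singleton]
        omega)
    obtain hd | hd : bound G k < h.length + d ∨ bound G k = h.length + d := by omega
    · rw [hchild, hout hd]
      exact hopt h H ht hd c hc
    · have hprescribed : σ' (I h) h = best h (I h) := if_pos hd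
      rw [outcomeFrom_of_not_terminal hB hσ'.validProfile H ht, hprescribed, hchild, hchild]
      exact (hbest h (I h)).2 c hc

theorem exists_nhe (hB : PlaysBounded G a0 k I) : ∃ σ : StratProfile G, NHE G a0 k I σ := by
  obtain ⟨σ, hσ, hopt⟩ := exists_oneShotOptimal_of_bound_lt_length_add hB (bound G k + 1)
  exact ⟨σ, (nhe_iff_forall_oneShotOptimal hB).2 ⟨hσ, fun h H ht => hopt h H ht (by omega)⟩⟩

end OneShotDeviation

section CommonOptimum

variable {G : Game n} {a0 b : Profile G} {k : ℕ} {I : Hist G → Fin n} {σ : StratProfile G}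
  {h : Hist G}

/-- Every player strictly prefers `b` to all other profiles. -/
def IsCommonOptimum (G : Game n) (b : Profile G) : Prop :=
  ∀ i s, s ≠ b → G.u i s < G.u i b

theorem IsCommonOptimum.u_le (hb : IsCommonOptimum G b) (i : Fin n) (s : Profile G) :
    G.u i s ≤ G.u i b := by
  obtain rfl | hs := eq_or_ne s b
  · exact le_rfl
  · exact (hb i s hs).le

theorem IsCommonOptimum.eq_of_u_le (hb : IsCommonOptimum G b) {i : Fin n} {s : Profile G}
    (hs : G.u i b ≤ G.u i s) : s = b :=
  of_not_not fun hne => (hb i s hne).not_ge hs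

theorem outcomeFrom_eq_of_feasible (hb : IsCommonOptimum G b) (hopt : OneShotOptimal G a0 k I σ h)
    {c : Option (G.A (I h))} (hc : Feasible G a0 k h (I h) c)
    (hout : outcomeFrom G a0 k I σ (h ++ [⟨I h, c⟩]) = b) : outcomeFrom G a0 k I σ h = b :=
  hb.eq_of_u_le (hout ▸ hopt c hc)

theorem outcomeFrom_eq_of_refpt_eq (hb : IsCommonOptimum G b) (hB : PlaysBounded G a0 k I)
    (hσ : NHE G a0 k I σ) (H : IsNode G a0 k I h) (hr : refpt G a0 h = b) :
    outcomeFrom G a0 k I σ h = b := by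
  revert hr
  refine IsNode.backwardInduction hB ?_ ?_ H
  · intro h _ ht hr
    rwa [outcomeFrom_of_terminal σ ht]
  · intro h H ht ih hr
    exact outcomeFrom_eq_of_feasible hb (hσ.oneShotOptimal hB H ht) (feasible_none h _)
      (ih none (availAct_none h _) (by rwa [refpt_append_pass]))

/-- The histories along which the players switch to their components of `b` one after the other:
nobody has stayed, everybody who has acted plays their component of `b`, and the state `b` has not
occurred before `h`. -/
structure Approaching (G : Game n) (a0 b : Profile G) (h : Hist G) : Prop where
  proposer_eq : proposer G a0 h = none
  state_eq : ∀ i ∈ h.map Sigma.fst, state G a0 h i = b i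
  state_ne : ∀ t < h.length, state G a0 (h.take t) ≠ b

namespace Approaching

theorem nil : Approaching G a0 b [] :=
  ⟨rfl, fun _ hi => absurd hi List.not_mem_nil, fun t ht => absurd ht (Nat.not_lt_zero t)⟩

theorem not_terminal (hh : Approaching G a0 b h) (hn : 0 < n) : ¬ Terminal G a0 h := by
  rintro (hstay | hpass)
  · exact not_terminalStay_of_proposer_eq_none hh.proposer_eq hstay
  · have hs : state G a0 h = b := funext fun i => hh.state_eq i (hpass.mem_movers i)
    obtain ⟨h', i, rfl⟩ := hpass.exists_eq_append_pass hn
    refine hh.state_ne h'.length (by simp) ?_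
    rwa [List.take_left, ← state_append_pass h' i]

theorem state_take_append_ne (hh : Approaching G a0 b h) (hs : state G a0 h ≠ b) (m : Move G) :
    ∀ t < (h ++ [m]).length, state G a0 ((h ++ [m]).take t) ≠ b := by
  intro t ht
  rw [List.length_append, List.length_singleton] at ht
  obtain ht | rfl := Nat.lt_succ_iff_lt_or_eq.1 ht
  · rw [List.take_append_of_le_length ht.le]
    exact hh.state_ne t ht
  · rwa [List.take_left]

theorem append_pass (hh : Approaching G a0 b h) (hs : state G a0 h ≠ b) {i : Fin n}
    (hi : state G a0 h i = b i) : Approaching G a0 b (h ++ [⟨i, none⟩]) where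
  proposer_eq := (proposer_append_pass h i).trans hh.proposer_eq
  state_eq l hl := by
    rw [state_append_pass]
    obtain hl | rfl : l ∈ h.map Sigma.fst ∨ l = i := by simpa using hl
    exacts [hh.state_eq l hl, hi]
  state_ne := hh.state_take_append_ne hs _

theorem append_move (hh : Approaching G a0 b h) (hs : state G a0 h ≠ b) {i : Fin n}
    (hi : b i ≠ state G a0 h i) : Approaching G a0 b (h ++ [⟨i, some (b i)⟩]) where
  proposer_eq := (proposer_append_move hi).trans hh.proposer_eq
  state_eq l hl := by
    rw [state_append_move hi]
    obtain rfl | hne := eq_or_ne l i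
    · exact Function.update_self ..
    · rw [Function.update_of_ne hne]
      exact hh.state_eq l (by simpa [hne] using hl)
  state_ne := hh.state_take_append_ne hs _

theorem notMem_movers (hh : Approaching G a0 b h) (hI : Admissible G a0 k I)
    (H : IsNode G a0 k I h) (hs : state G a0 h ≠ b) : I h ∉ h.map Sigma.fst := by
  intro hmem
  obtain ⟨l, hl⟩ := Function.ne_iff.1 hs
  have hl_notMem : l ∉ h.map Sigma.fst := fun hl' => hl (hh.state_eq l hl')
  have hne : I h ≠ l := fun e => hl_notMem (e ▸ hmem)
  have hcount := hI _ (H.append_choice (hh.not_terminal (I h).pos) (availAct_none h _)) (I h) l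
  have hpos := List.count_pos_iff.2 hmem
  have hl_last : List.count l [I h] = 0 := List.count_eq_zero.2 (by simpa using hne.symm)
  simp only [List.map_append, List.map_singleton, List.count_append, List.count_singleton_self,
    List.count_eq_zero.2 hl_notMem, hl_last] at hcount
  omega

theorem outcomeFrom_eq (hh : Approaching G a0 b h) (hb : IsCommonOptimum G b) (hk : 0 < k)
    (hI : Admissible G a0 k I) (hσ : NHE G a0 k I σ) (H : IsNode G a0 k I h) :
    outcomeFrom G a0 k I σ h = b := by
  revert hh
  have hB := hI.playsBounded
  refine IsNode.backwardInduction hB ?_ ?_ H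
  · exact fun h _ ht hh => absurd ht (hh.not_terminal (I h).pos)
  intro h H ht ih hh
  suffices ∃ c, Feasible G a0 k h (I h) c ∧ outcomeFrom G a0 k I σ (h ++ [⟨I h, c⟩]) = b from
    this.elim fun c hc => outcomeFrom_eq_of_feasible hb (hσ.oneShotOptimal hB H ht) hc.1 hc.2
  by_cases hs : state G a0 h = b
  · have havail : availAct G a0 k h (some (state G a0 h (I h))) := by
      rwa [availAct_some, countAct_eq_zero_of_state_ne (hs ▸ hh.state_ne)]
    refine ⟨some (state G a0 h (I h)), ⟨havail, fun _ j _ => hs ▸ hb.u_le j _⟩, ?_⟩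
    exact outcomeFrom_eq_of_refpt_eq hb hB hσ (H.append_choice ht havail)
      ((refpt_append_stay h _).trans hs)
  by_cases hi : b (I h) = state G a0 h (I h)
  · exact ⟨none, feasible_none h _, ih none (availAct_none h _) (hh.append_pass hs hi.symm)⟩
  · have hfeas : Feasible G a0 k h (I h) (some (b (I h))) :=
      feasible_some_of_ne
        (by rwa [countAct_eq_zero_of_notMem_movers (hh.notMem_movers hI H hs)]) hi
    exact ⟨_, hfeas, ih _ hfeas.1 (hh.append_move hs hi)⟩

end Approaching

theorem stagHunt_nhe_outcome_general (hb : IsCommonOptimum G b) (hk : 0 < k)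
    (hI : Admissible G a0 k I) :
    (∃ σ : StratProfile G, NHE G a0 k I σ) ∧
      ∀ σ : StratProfile G, NHE G a0 k I σ → outcome G a0 k I σ = b :=
  ⟨exists_nhe hI.playsBounded, fun _ hσ =>
    Approaching.nil.outcomeFrom_eq hb hk hI hσ isNode_nil⟩

end CommonOptimum

theorem isCommonOptimum_stagStag : IsCommonOptimum stagHunt stagStag := by
  intro i s hs
  have hval : stagHunt.u i stagStag = 4 := rfl
  rw [hval]
  simp only [stagHunt]
  split_ifs with h0 h1
  · exact absurd (funext (Fin.forall_fin_two.2 ⟨h0, h1⟩)) hs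
  all_goals norm_num

/-- In the Stag-Hunt game, for every initial reference point,
every `k ≥ 1` and every admissible player function, the no-harm equilibrium
outcome of `Γ(a0,k,I)` is `(Stag,Stag)`. -/
theorem stagHunt_nhe_outcome :
    ∀ a0 : Profile stagHunt, ∀ k : ℕ, 0 < k → ∀ I : Hist stagHunt → Fin 2,
      Admissible stagHunt a0 k I →
        (∃ σ : StratProfile stagHunt, NHE stagHunt a0 k I σ) ∧
        (∀ σ : StratProfile stagHunt, NHE stagHunt a0 k I σ →
          outcome stagHunt a0 k I σ = stagStag) :=
  fun _ _ hk _ hI => stagHunt_nhe_outcome_general isCommonOptimum_stagStag hk hI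

end NoHarm
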